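/- Suppose f : [−1,1] → [−1,1] can, for every m, be uniformly approximated up to error 2^{-m} by a real polynomial P_m of degree ≤ D_m. Then f has binary modulus of continuity μ_f(n) ≤ n + 2 + 2⌈log₂ D_{n+2}⌉: |x − x'| ≤ 2^{-(n+2+2⌈log₂ D_{n+2}⌉)} implies |f(x) − f(x')| ≤ 2^{-n}. -/

import Mathlib

namespace Polynomial

open Real Filter Topology

theorem abs_eval_one_derivative_le {n : ℕ} {P : ℝ[X]} (hdeg : P.natDegree ≤ n)
    (hP : ∀ x ∈ Set.Icc (-1 : ℝ) 1, |P.eval x| ≤ 1) :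
    |P.derivative.eval 1| ≤ (n : ℝ) ^ 2 := by
  have key : ∀ Q : ℝ[X], Q.natDegree ≤ n → (∀ x ∈ Set.Icc (-1 : ℝ) 1, |Q.eval x| ≤ 1) →
      Q.derivative.eval 1 ≤ (n : ℝ) ^ 2 := fun Q hQdeg hQ => by
    have h := Chebyshev.eval_iterate_derivative_le_of_forall_abs_le_one (k := 1) le_rfl
      (natDegree_le_iff_degree_le.mp hQdeg) hQ
    simpa [Chebyshev.derivative_T_eval_one] using h
  refine abs_le'.mpr ⟨key P hdeg hP, ?_⟩
  simpa using key (-P) (by simpa using hdeg) (by simpa using hP)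

theorem abs_eval_derivative_mul_one_add_le {n : ℕ} {P : ℝ[X]} (hdeg : P.natDegree ≤ n)
    (hP : ∀ x ∈ Set.Icc (-1 : ℝ) 1, |P.eval x| ≤ 1) {y : ℝ} (hy : y ∈ Set.Icc (-1 : ℝ) 1) :
    |P.derivative.eval y| * (1 + y) ≤ 2 * (n : ℝ) ^ 2 := by
  obtain ⟨hy₁, hy₂⟩ := hy
  have hlin : (C ((1 + y) / 2) * X + C ((y - 1) / 2) : ℝ[X]).natDegree ≤ 1 :=
    natDegree_linear_le
  have h := abs_eval_one_derivative_le (n := n)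
    (P := P.comp (C ((1 + y) / 2) * X + C ((y - 1) / 2)))
    (natDegree_comp_le.trans <| (Nat.mul_le_mul hdeg hlin).trans_eq (mul_one n)) (by
      rintro x ⟨hx₁, hx₂⟩
      rw [eval_comp]
      apply hP
      simp only [eval_add, eval_mul, eval_C, eval_X]
      constructor <;> nlinarith)
  have hy_mid : (1 + y) / 2 + (y - 1) / 2 = y := by ring
  simp only [derivative_comp, derivative_add, derivative_mul, derivative_C, derivative_X,
    eval_mul, eval_comp, eval_add, eval_C, eval_X, zero_mul, mul_one,
    zero_add, add_zero, hy_mid] at h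
  rw [abs_mul, abs_of_nonneg (by linarith : (0 : ℝ) ≤ (1 + y) / 2)] at h
  linarith

theorem abs_eval_cos_derivative_mul_sin_le {n : ℕ} {P : ℝ[X]} (hdeg : P.natDegree ≤ n)
    (hP : ∀ x ∈ Set.Icc (-1 : ℝ) 1, |P.eval x| ≤ 1) {θ : ℝ} (hθ : θ ∈ Set.Icc 0 π) :
    |P.derivative.eval (cos θ)| * sin θ ≤ θ * (n : ℝ) ^ 2 := by
  have hsin : 0 ≤ sin θ := sin_nonneg_of_mem_Icc hθ
  have key : ∀ k : ℕ, 1 ≤ k →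
      |P.derivative.eval (cos θ)| * sin θ * (1 + cos (θ / k)) ≤ 2 * (θ * (n : ℝ) ^ 2) := by
    intro k hk
    have hk₀ : (0 : ℝ) < k := by exact_mod_cast hk
    have hk₁ : (1 : ℝ) ≤ k := by exact_mod_cast hk
    have hφ : 0 ≤ θ / k := div_nonneg hθ.1 hk₀.le
    have hφπ : θ / k ≤ π := (div_le_self hθ.1 hk₁).trans hθ.2
    have hsinφ : 0 ≤ sin (θ / k) := sin_nonneg_of_nonneg_of_le_pi hφ hφπ
    have hkφ : (k : ℝ) * (θ / k) = θ := mul_div_cancel₀ θ hk₀.ne'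
    have hcos : (Chebyshev.T ℝ k).eval (cos (θ / k)) = cos θ := by
      rw [Chebyshev.T_real_cos, Int.cast_natCast, hkφ]
    have hU : (Chebyshev.U ℝ ((k : ℤ) - 1)).eval (cos (θ / k)) * sin (θ / k) = sin θ := by
      rw [Chebyshev.U_real_cos]
      simp [hkφ]
    have h := abs_eval_derivative_mul_one_add_le (n := n * k) (P := P.comp (Chebyshev.T ℝ k))
      (by simpa [natDegree_comp] using Nat.mul_le_mul_right k hdeg)
      (fun x hx => by
        rw [eval_comp]
        exact hP _ (Chebyshev.eval_T_real_mem_Icc k hx))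
      ⟨neg_one_le_cos (θ / k), cos_le_one _⟩
    simp only [derivative_comp, Chebyshev.T_derivative_eq_U, eval_mul, eval_comp, hcos,
      Int.cast_natCast, eval_natCast, abs_mul, Nat.abs_cast, Nat.cast_mul] at h
    have hU' : |(Chebyshev.U ℝ ((k : ℤ) - 1)).eval (cos (θ / k))| * sin (θ / k) = sin θ := by
      rw [← abs_of_nonneg hsin, ← hU, abs_mul, abs_of_nonneg hsinφ]
    refine le_of_mul_le_mul_left ?_ hk₀
    calc k * (|P.derivative.eval (cos θ)| * sin θ * (1 + cos (θ / k)))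
        = k * |(Chebyshev.U ℝ ((k : ℤ) - 1)).eval (cos (θ / k))| * |P.derivative.eval (cos θ)| *
            (1 + cos (θ / k)) * sin (θ / k) := by rw [← hU']; ring
      _ ≤ 2 * (n * k) ^ 2 * (θ / k) :=
          mul_le_mul h (sin_le hφ) hsinφ (by positivity)
      _ = k * (2 * (θ * (n : ℝ) ^ 2)) := by field_simp
  have hlim : Tendsto (fun k : ℕ => |P.derivative.eval (cos θ)| * sin θ * (1 + cos (θ / k)))
      atTop (𝓝 (|P.derivative.eval (cos θ)| * sin θ * (1 + cos 0))) :=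
    (((continuous_cos.tendsto 0).comp (tendsto_const_div_atTop_nhds_zero_nat θ)).const_add
      1).const_mul _
  have h := le_of_tendsto hlim (eventually_atTop.mpr ⟨1, key⟩)
  rw [cos_zero] at h
  linarith

/-- Markov's inequality for the derivative of a polynomial, up to a factor `π / 2`. -/
theorem abs_eval_derivative_le {n : ℕ} {P : ℝ[X]} (hdeg : P.natDegree ≤ n)
    (hP : ∀ x ∈ Set.Icc (-1 : ℝ) 1, |P.eval x| ≤ 1) {x : ℝ} (hx : x ∈ Set.Icc (-1 : ℝ) 1) :
    |P.derivative.eval x| ≤ π / 2 * (n : ℝ) ^ 2 := by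
  wlog hx₀ : 0 ≤ x generalizing P x
  · have h := this (P := P.comp (-X)) (x := -x) (by simpa [natDegree_comp] using hdeg)
      (fun y hy => by
        rw [eval_comp]
        exact hP _ (by simpa [and_comm, neg_le] using hy))
      (by simpa [and_comm, neg_le] using hx) (by linarith)
    simpa [derivative_comp] using h
  rcases hx.2.eq_or_lt with rfl | hx₁
  · refine (abs_eval_one_derivative_le hdeg hP).trans ?_
    nlinarith [pi_gt_three, sq_nonneg (n : ℝ)]
  · have hθ : 0 < arccos x := arccos_pos.mpr hx₁
    have h := abs_eval_cos_derivative_mul_sin_le hdeg hP ⟨hθ.le, arccos_le_pi x⟩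
    rw [cos_arccos hx.1 hx.2] at h
    have hsin := mul_le_sin hθ.le (arccos_le_pi_div_two.mpr hx₀)
    have h' := (mul_le_mul_of_nonneg_left hsin (abs_nonneg (P.derivative.eval x))).trans h
    refine le_of_mul_le_mul_left ?_ hθ
    calc arccos x * |P.derivative.eval x|
        = π / 2 * (|P.derivative.eval x| * (2 / π * arccos x)) := by field_simp
      _ ≤ π / 2 * (arccos x * (n : ℝ) ^ 2) := by gcongr
      _ = arccos x * (π / 2 * (n : ℝ) ^ 2) := by ring

theorem abs_eval_sub_eval_le {n : ℕ} {P : ℝ[X]} (hdeg : P.natDegree ≤ n) {M : ℝ} (hM : 0 < M)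
    (hP : ∀ x ∈ Set.Icc (-1 : ℝ) 1, |P.eval x| ≤ M) {x y : ℝ} (hx : x ∈ Set.Icc (-1 : ℝ) 1)
    (hy : y ∈ Set.Icc (-1 : ℝ) 1) :
    |P.eval x - P.eval y| ≤ π / 2 * M * (n : ℝ) ^ 2 * |x - y| := by
  refine (convex_Icc (-1 : ℝ) 1).norm_image_sub_le_of_norm_deriv_le
    (fun z _ => P.differentiableAt) (fun z hz => ?_) hy hx
  rw [Polynomial.deriv, norm_eq_abs]
  have h := abs_eval_derivative_le (n := n) (P := C M⁻¹ * P)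
    ((natDegree_C_mul_le _ _).trans hdeg)
    (fun w hw => by
      rw [eval_C_mul, abs_mul, abs_of_pos (inv_pos.mpr hM)]
      exact (inv_mul_le_one₀ hM).mpr (hP w hw)) hz
  rw [derivative_C_mul, eval_C_mul, abs_mul, abs_of_pos (inv_pos.mpr hM),
    inv_mul_le_iff₀ hM] at h
  linarith

end Polynomial

theorem modulus_from_polynomial_approximation (f : ℝ → ℝ)
    (hf : ∀ x ∈ Set.Icc (-1 : ℝ) 1, f x ∈ Set.Icc (-1 : ℝ) 1)
    (P : ℕ → Polynomial ℝ) (D : ℕ → ℕ) (hD : ∀ m, 1 ≤ D m)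
    (hdeg : ∀ m, (P m).natDegree ≤ D m)
    (happrox : ∀ m, ∀ x ∈ Set.Icc (-1 : ℝ) 1, |f x - (P m).eval x| ≤ (1/2 : ℝ) ^ m) :
    ∀ (n : ℕ), ∀ x ∈ Set.Icc (-1 : ℝ) 1, ∀ x' ∈ Set.Icc (-1 : ℝ) 1,
      |x - x'| ≤ (1/2 : ℝ) ^ (n + 2 + 2 * Nat.clog 2 (D (n + 2))) →
      |f x - f x'| ≤ (1/2 : ℝ) ^ n := by
  intro n x hx x' hx' hxx'
  have hpow : (1 / 2 : ℝ) ^ (n + 2) = (1 / 2) ^ n / 4 := by ring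
  have hbound : ∀ y ∈ Set.Icc (-1 : ℝ) 1, |(P (n + 2)).eval y| ≤ 5 / 4 := by
    intro y hy
    have h := abs_le.mp (happrox (n + 2) y hy)
    have h_one : (1 / 2 : ℝ) ^ n ≤ 1 := pow_le_one₀ (by norm_num) (by norm_num)
    rw [hpow] at h
    exact abs_le.mpr ⟨by linarith [(hf y hy).1, h.2], by linarith [(hf y hy).2, h.1]⟩
  have hlip := Polynomial.abs_eval_sub_eval_le (hdeg (n + 2)) (by norm_num) hbound hx hx'
  have hclog : (D (n + 2) : ℝ) ≤ 2 ^ Nat.clog 2 (D (n + 2)) := by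
    exact_mod_cast Nat.le_pow_clog one_lt_two (D (n + 2))
  have hstep : (D (n + 2) : ℝ) ^ 2 * |x - x'| ≤ (1 / 2) ^ (n + 2) := by
    calc (D (n + 2) : ℝ) ^ 2 * |x - x'|
        ≤ (2 ^ Nat.clog 2 (D (n + 2))) ^ 2 *
            (1 / 2) ^ (n + 2 + 2 * Nat.clog 2 (D (n + 2))) := by gcongr
      _ = (1 / 2) ^ (n + 2) := by
        rw [pow_add, ← pow_mul, mul_comm _ 2, mul_left_comm, ← mul_pow]
        norm_num
  have hpoly : |(P (n + 2)).eval x - (P (n + 2)).eval x'| ≤ 2 * (1 / 2) ^ (n + 2) := by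
    refine hlip.trans ?_
    rw [mul_assoc]
    exact mul_le_mul (by linarith [Real.pi_lt_d2]) hstep (by positivity) (by norm_num)
  have h₁ := abs_le.mp (happrox (n + 2) x hx)
  have h₂ := abs_le.mp (happrox (n + 2) x' hx')
  have h₃ := abs_le.mp hpoly
  rw [hpow] at h₁ h₂ h₃
  exact abs_le.mpr ⟨by linarith [h₁.1, h₂.2, h₃.1], by linarith [h₁.2, h₂.1, h₃.2]⟩
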